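/- One-shot chain-rule-type bound for the smoothed max-relative entropy under channels: Let E, F : M_d(ℂ) → M_{d'}(ℂ) be quantum channels, let ρ, σ be states on ℂ^d, and let ε, ε' ∈ (0,1) with ε + ε' < 1, μ > 0 and m ≥ 1. Then there exists a state ν ∈ B^ε(ρ) such that D_max^{ε+ε'}((E(ρ))^{⊗m} ‖ (F(σ))^{⊗m}) ≤ D_max^{ε'}((E(ν))^{⊗m} ‖ (F(ν))^{⊗m}) + m · D_max^{ε/m}(ρ‖σ) + μ in the extended reals. -/

import Mathlib

open scoped Kronecker ComplexOrder

noncomputable section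

namespace QCD

attribute [local instance] Classical.propDecidable

variable {n m : Type} [Fintype n] [DecidableEq n] [Fintype m] [DecidableEq m]

/-- The real part of the trace of a complex matrix. -/
def rtr (A : Matrix n n ℂ) : ℝ := (A.trace).re

/-- A quantum state: positive semidefinite with trace one. -/
def IsState (ρ : Matrix n n ℂ) : Prop := ρ.PosSemidef ∧ ρ.trace = 1

/-- Loewner order: `A ≤ B` iff `B - A` is positive semidefinite. -/
def loewnerLE (A B : Matrix n n ℂ) : Prop := (B - A).PosSemidef

/-- Support containment (for PSD matrices): `ker σ ⊆ ker ρ`. -/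
def SuppLE (ρ σ : Matrix n n ℂ) : Prop := ∀ v : n → ℂ, σ.mulVec v = 0 → ρ.mulVec v = 0

/-- Functional calculus for Hermitian matrices (junk value `0` otherwise). -/
def matFun (f : ℝ → ℝ) (A : Matrix n n ℂ) : Matrix n n ℂ :=
  if hA : A.IsHermitian then
    (hA.eigenvectorUnitary : Matrix n n ℂ) *
      Matrix.diagonal (fun i => (f (hA.eigenvalues i) : ℂ)) *
      (star (hA.eigenvectorUnitary : Matrix n n ℂ))
  else 0

/-- Matrix square root via functional calculus. -/
def msqrt (A : Matrix n n ℂ) : Matrix n n ℂ := matFun Real.sqrt A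

/-- Matrix real power taken on the support (`0 ^ t := 0`). -/
def mpow (A : Matrix n n ℂ) (t : ℝ) : Matrix n n ℂ :=
  matFun (fun x => if x = 0 then 0 else x ^ t) A

/-- Matrix base-2 logarithm on the support. -/
def mlog (A : Matrix n n ℂ) : Matrix n n ℂ := matFun (Real.logb 2) A

/-- Positive part of a Hermitian matrix. -/
def mposPart (A : Matrix n n ℂ) : Matrix n n ℂ := matFun (fun x => max x 0) A

/-- Trace norm. -/
def traceNorm (A : Matrix n m ℂ) : ℝ := rtr (msqrt (A.conjTranspose * A))

/-- Base-2 logarithm as an extended real (`⊥` on nonpositive input). -/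
def elog (x : ℝ) : EReal := if x ≤ 0 then ⊥ else ((Real.logb 2 x : ℝ) : EReal)

/-- Base-2 logarithm of an extended real. -/
def elogE (x : EReal) : EReal := if x = ⊤ then ⊤ else elog x.toReal

/-- `2 ^ x` for an extended real `x`. -/
def epow2 (x : EReal) : EReal :=
  if x = ⊤ then ⊤ else if x = ⊥ then 0 else ((((2:ℝ) ^ x.toReal : ℝ)) : EReal)

/-- Umegaki relative entropy (base 2), `⊤` if the support condition fails. -/
def relEntropy (ρ σ : Matrix n n ℂ) : EReal :=
  if SuppLE ρ σ then ((rtr (ρ * (mlog ρ - mlog σ)) : ℝ) : EReal) else ⊤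

/-- Petz–Rényi divergence (base 2). -/
def petzRenyi (α : ℝ) (ρ σ : Matrix n n ℂ) : EReal :=
  if 1 < α ∧ ¬ SuppLE ρ σ then ⊤
  else (((α - 1)⁻¹ : ℝ) : EReal) * elog (rtr (mpow ρ α * mpow σ (1 - α)))

/-- Geometric (maximal) Rényi divergence (base 2). -/
def geomRenyi (α : ℝ) (ρ σ : Matrix n n ℂ) : EReal :=
  if SuppLE ρ σ then
    (((α - 1)⁻¹ : ℝ) : EReal) *
      elog (rtr (σ * mpow (mpow σ (-(1/2 : ℝ)) * ρ * mpow σ (-(1/2 : ℝ))) α))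
  else ⊤

/-- Max-relative entropy (base 2). -/
def dMax (ρ σ : Matrix n n ℂ) : EReal :=
  sInf {x : EReal | ∃ lam : ℝ, x = (lam : EReal) ∧ loewnerLE ρ ((((2:ℝ) ^ lam : ℝ) : ℂ) • σ)}

/-- Uhlmann fidelity. -/
def fidelity (ρ σ : Matrix n n ℂ) : ℝ := (rtr (msqrt (msqrt σ * ρ * msqrt σ))) ^ 2

/-- Sine (purified) distance. -/
def sineDist (ρ σ : Matrix n n ℂ) : ℝ := Real.sqrt (1 - fidelity ρ σ)

/-- Smoothed max-relative entropy: smoothing over states in the sine-distance ball. -/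
def dMaxSmooth (δ : ℝ) (ρ σ : Matrix n n ℂ) : EReal :=
  ⨅ (ρ' : Matrix n n ℂ) (_ : IsState ρ' ∧ sineDist ρ ρ' ≤ δ), dMax ρ' σ

/-- Hypothesis testing divergence (base 2). -/
def dH (ε : ℝ) (ρ σ : Matrix n n ℂ) : EReal :=
  - elog (sInf {x : ℝ | ∃ T : Matrix n n ℂ,
      T.PosSemidef ∧ ((1 : Matrix n n ℂ) - T).PosSemidef ∧ 1 - ε ≤ rtr (T * ρ) ∧ x = rtr (T * σ)})

/-- The quantity `c_γ(ρ‖σ)`. -/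
def cGamma (γ : ℝ) (ρ σ : Matrix n n ℂ) : EReal :=
  ((γ⁻¹ : ℝ) : EReal) *
    elogE (epow2 ((γ : ℝ) * petzRenyi (1 + γ) ρ σ) +
           epow2 (((-γ : ℝ) : EReal) * petzRenyi (1 - γ) ρ σ) + 1)

/-- Binary entropy (base 2). -/
def binEnt (x : ℝ) : ℝ := -(x * Real.logb 2 x) - (1 - x) * Real.logb 2 (1 - x)

/-- Action of `id_k ⊗ Φ` on block matrices. -/
def blockApply {k : Type} (Φ : Matrix n n ℂ →ₗ[ℂ] Matrix m m ℂ)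
    (M : Matrix (k × n) (k × n) ℂ) : Matrix (k × m) (k × m) ℂ :=
  Matrix.of fun p q => Φ (Matrix.of fun a b => M (p.1, a) (q.1, b)) p.2 q.2

/-- Action of `Φ ⊗ id_k` on block matrices. -/
def blockApplyRight {k : Type} (Φ : Matrix n n ℂ →ₗ[ℂ] Matrix m m ℂ)
    (M : Matrix (n × k) (n × k) ℂ) : Matrix (m × k) (m × k) ℂ :=
  Matrix.of fun p q => Φ (Matrix.of fun a b => M (a, p.2) (b, q.2)) p.1 q.1

/-- Quantum channel: trace preserving and completely positive. -/
def IsQChannel (Φ : Matrix n n ℂ →ₗ[ℂ] Matrix m m ℂ) : Prop :=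
  (∀ M : Matrix n n ℂ, (Φ M).trace = M.trace) ∧
  (∀ k : ℕ, 1 ≤ k → ∀ M : Matrix (Fin k × n) (Fin k × n) ℂ, M.PosSemidef →
    (blockApply Φ M).PosSemidef)

/-- `id_k ⊗ Φ` as a linear map. -/
def blockApplyL (k : Type) (Φ : Matrix n n ℂ →ₗ[ℂ] Matrix m m ℂ) :
    Matrix (k × n) (k × n) ℂ →ₗ[ℂ] Matrix (k × m) (k × m) ℂ where
  toFun := blockApply Φ
  map_add' M N := by
    ext p q
    show Φ (Matrix.of fun a b => (M + N) (p.1, a) (q.1, b)) p.2 q.2 = _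
    have h : (Matrix.of fun a b => (M + N) (p.1, a) (q.1, b)) =
        (Matrix.of fun a b => M (p.1, a) (q.1, b)) +
          (Matrix.of fun a b => N (p.1, a) (q.1, b)) := rfl
    rw [h, map_add]
    rfl
  map_smul' c M := by
    ext p q
    show Φ (Matrix.of fun a b => (c • M) (p.1, a) (q.1, b)) p.2 q.2 = _
    have h : (Matrix.of fun a b => (c • M) (p.1, a) (q.1, b)) =
        c • (Matrix.of fun a b => M (p.1, a) (q.1, b)) := rfl
    rw [h, map_smul]
    rfl

/-- `Φ ⊗ id_k` as a linear map. -/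
def blockApplyRightL (k : Type) (Φ : Matrix n n ℂ →ₗ[ℂ] Matrix m m ℂ) :
    Matrix (n × k) (n × k) ℂ →ₗ[ℂ] Matrix (m × k) (m × k) ℂ where
  toFun := blockApplyRight Φ
  map_add' M N := by
    ext p q
    show Φ (Matrix.of fun a b => (M + N) (a, p.2) (b, q.2)) p.1 q.1 = _
    have h : (Matrix.of fun a b => (M + N) (a, p.2) (b, q.2)) =
        (Matrix.of fun a b => M (a, p.2) (b, q.2)) +
          (Matrix.of fun a b => N (a, p.2) (b, q.2)) := rfl
    rw [h, map_add]
    rfl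
  map_smul' c M := by
    ext p q
    show Φ (Matrix.of fun a b => (c • M) (a, p.2) (b, q.2)) p.1 q.1 = _
    have h : (Matrix.of fun a b => (c • M) (a, p.2) (b, q.2)) =
        c • (Matrix.of fun a b => M (a, p.2) (b, q.2)) := rfl
    rw [h, map_smul]
    rfl

/-- Tensor product of two channels (Kronecker product action). -/
def tensorChannel {n₁ m₁ n₂ m₂ : Type}
    (E₁ : Matrix n₁ n₁ ℂ →ₗ[ℂ] Matrix m₁ m₁ ℂ) (E₂ : Matrix n₂ n₂ ℂ →ₗ[ℂ] Matrix m₂ m₂ ℂ) :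
    Matrix (n₁ × n₂) (n₁ × n₂) ℂ →ₗ[ℂ] Matrix (m₁ × m₂) (m₁ × m₂) ℂ :=
  (blockApplyRightL m₂ E₁).comp (blockApplyL n₁ E₂)

/-- Index type for `k`-fold tensor powers. -/
def tpow (ι : Type) : ℕ → Type
  | 0 => PUnit
  | (k+1) => tpow ι k × ι

def tpowFintype (ι : Type) [Fintype ι] : ∀ k : ℕ, Fintype (tpow ι k)
  | 0 => inferInstanceAs (Fintype PUnit)
  | (k+1) => letI := tpowFintype ι k; inferInstanceAs (Fintype (tpow ι k × ι))

instance (ι : Type) [Fintype ι] (k : ℕ) : Fintype (tpow ι k) := tpowFintype ι k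

def tpowDecEq (ι : Type) [DecidableEq ι] : ∀ k : ℕ, DecidableEq (tpow ι k)
  | 0 => inferInstanceAs (DecidableEq PUnit)
  | (k+1) => letI := tpowDecEq ι k; inferInstanceAs (DecidableEq (tpow ι k × ι))

instance (ι : Type) [DecidableEq ι] (k : ℕ) : DecidableEq (tpow ι k) := tpowDecEq ι k

/-- `k`-fold Kronecker tensor power of a matrix. -/
def tpowMat (ρ : Matrix n n ℂ) : ∀ k : ℕ, Matrix (tpow n k) (tpow n k) ℂ
  | 0 => 1
  | (k+1) => (tpowMat ρ k) ⊗ₖ ρ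

/-- `k`-fold tensor power of a channel. -/
def tpowChannel (Φ : Matrix n n ℂ →ₗ[ℂ] Matrix m m ℂ) :
    ∀ k : ℕ, Matrix (tpow n k) (tpow n k) ℂ →ₗ[ℂ] Matrix (tpow m k) (tpow m k) ℂ
  | 0 => LinearMap.id
  | (k+1) => tensorChannel (tpowChannel Φ k) Φ

/-- Channel divergence induced by a divergence `𝔇` on states:
sup over `k ≥ 1` and input states `ν` on `ℂ^k ⊗ ℂ^d`. -/
def chDiv (𝔇 : ∀ (p : Type) [Fintype p] [DecidableEq p], Matrix p p ℂ → Matrix p p ℂ → EReal)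
    (E F : Matrix n n ℂ →ₗ[ℂ] Matrix m m ℂ) : EReal :=
  ⨆ (k : ℕ) (_ : 1 ≤ k) (ν : Matrix (Fin k × n) (Fin k × n) ℂ) (_ : IsState ν),
    𝔇 (Fin k × m) (blockApply E ν) (blockApply F ν)

/-- The geometric Rényi divergence as a divergence family. -/
def geomD (α : ℝ) : ∀ (p : Type) [Fintype p] [DecidableEq p],
    Matrix p p ℂ → Matrix p p ℂ → EReal :=
  fun _ _ _ => geomRenyi α

/-- The Umegaki relative entropy as a divergence family. -/
def relD : ∀ (p : Type) [Fintype p] [DecidableEq p],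
    Matrix p p ℂ → Matrix p p ℂ → EReal :=
  fun _ _ _ => relEntropy

/-- The hypothesis testing divergence as a divergence family. -/
def dHD (ε : ℝ) : ∀ (p : Type) [Fintype p] [DecidableEq p],
    Matrix p p ℂ → Matrix p p ℂ → EReal :=
  fun _ _ _ => dH ε

/-- Regularized channel relative entropy. -/
def regRelEntropy (E F : Matrix n n ℂ →ₗ[ℂ] Matrix m m ℂ) : EReal :=
  ⨆ (k : ℕ) (_ : 1 ≤ k),
    (((k : ℝ)⁻¹ : ℝ) : EReal) * chDiv relD (tpowChannel E k) (tpowChannel F k)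

end QCD

namespace QCD

open Matrix

section helpers

variable {n k : Type} [Fintype n] [DecidableEq n] [Fintype k] [DecidableEq k]

lemma matFun_eq (f : ℝ → ℝ) {A : Matrix n n ℂ} (hA : A.IsHermitian) :
    matFun f A = (hA.eigenvectorUnitary : Matrix n n ℂ) *
      Matrix.diagonal (fun i => (f (hA.eigenvalues i) : ℂ)) *
      (star (hA.eigenvectorUnitary : Matrix n n ℂ)) := by
  unfold matFun
  rw [dif_pos hA]

lemma matFun_mul (f g : ℝ → ℝ) {A : Matrix n n ℂ} (hA : A.IsHermitian) :
    matFun f A * matFun g A = matFun (fun x => f x * g x) A := by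
  rw [matFun_eq f hA, matFun_eq g hA, matFun_eq _ hA]
  have h : star (hA.eigenvectorUnitary : Matrix n n ℂ) * (hA.eigenvectorUnitary : Matrix n n ℂ) = 1 :=
    Unitary.coe_star_mul_self _
  have e : ∀ U V D D' : Matrix n n ℂ, V * U = 1 →
      (U * D * V) * (U * D' * V) = U * (D * D') * V := by
    intro U V D D' h
    calc (U * D * V) * (U * D' * V) = U * D * (V * U) * D' * V := by
          simp only [Matrix.mul_assoc]
      _ = _ := by rw [h]; simp only [Matrix.mul_assoc, Matrix.mul_one]
  rw [e _ _ _ _ h, Matrix.diagonal_mul_diagonal]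
  simp

lemma matFun_id {A : Matrix n n ℂ} (hA : A.IsHermitian) : matFun (fun x => x) A = A := by
  rw [matFun_eq _ hA]
  conv_rhs => rw [hA.spectral_theorem, Unitary.conjStarAlgAut_apply]
  rfl

lemma matFun_one {A : Matrix n n ℂ} (hA : A.IsHermitian) : matFun (fun _ => 1) A = 1 := by
  rw [matFun_eq _ hA]
  simp

lemma matFun_sub (f g : ℝ → ℝ) {A : Matrix n n ℂ} (hA : A.IsHermitian) :
    matFun f A - matFun g A = matFun (fun x => f x - g x) A := by
  rw [matFun_eq f hA, matFun_eq g hA, matFun_eq _ hA, ← Matrix.sub_mul, ← Matrix.mul_sub,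
    Matrix.diagonal_sub]
  simp

lemma matFun_congr {f g : ℝ → ℝ} {A : Matrix n n ℂ} (hA : A.PosSemidef)
    (h : ∀ x, 0 ≤ x → f x = g x) : matFun f A = matFun g A := by
  rw [matFun_eq f hA.1, matFun_eq g hA.1]
  have : (fun i => (f (hA.1.eigenvalues i) : ℂ)) = fun i => (g (hA.1.eigenvalues i) : ℂ) := by
    funext i
    rw [h _ (hA.eigenvalues_nonneg i)]
  rw [this]

lemma matFun_psd {f : ℝ → ℝ} {A : Matrix n n ℂ} (hA : A.PosSemidef)
    (h : ∀ x, 0 ≤ x → 0 ≤ f x) : (matFun f A).PosSemidef := by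
  rw [matFun_eq f hA.1, Matrix.star_eq_conjTranspose]
  apply Matrix.PosSemidef.mul_mul_conjTranspose_same
  apply Matrix.PosSemidef.diagonal
  intro i
  have := h _ (hA.eigenvalues_nonneg i)
  simpa using this

lemma msqrt_psd {A : Matrix n n ℂ} (hA : A.PosSemidef) : (msqrt A).PosSemidef :=
  matFun_psd hA fun x _ => Real.sqrt_nonneg x

lemma msqrt_herm {A : Matrix n n ℂ} (hA : A.PosSemidef) : (msqrt A)ᴴ = msqrt A :=
  (msqrt_psd hA).1

lemma msqrt_mul_self {A : Matrix n n ℂ} (hA : A.PosSemidef) : msqrt A * msqrt A = A := by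
  unfold msqrt
  rw [matFun_mul _ _ hA.1, matFun_congr hA (g := fun x => x) fun x hx => Real.mul_self_sqrt hx,
    matFun_id hA.1]

/-- Polar decomposition with a contraction. -/
lemma polar (N : Matrix k n ℂ) : ∃ W : Matrix k n ℂ, (1 - Wᴴ * W).PosSemidef ∧
    N = W * msqrt (Nᴴ * N) ∧ Wᴴ * N = msqrt (Nᴴ * N) := by
  have hH : (Nᴴ * N).PosSemidef := Matrix.posSemidef_conjTranspose_mul_self N
  set H := Nᴴ * N with hHd
  set f : ℝ → ℝ := fun x => (Real.sqrt x)⁻¹ with hf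
  have hfp : (matFun f H).PosSemidef := matFun_psd hH fun x _ => inv_nonneg.2 (Real.sqrt_nonneg x)
  have hfh : (matFun f H)ᴴ = matFun f H := hfp.1
  have key : matFun f H * H = msqrt H := by
    have : matFun f H * matFun (fun x => x) H = msqrt H := by
      rw [matFun_mul _ _ hH.1]
      apply matFun_congr hH
      intro x hx
      simp only [hf]
      rcases eq_or_lt_of_le hx with h | h
      · simp [← h]
      · have := Real.sqrt_pos.2 h
        field_simp
        exact (Real.sq_sqrt hx).symm
    rwa [matFun_id hH.1] at this
  refine ⟨N * matFun f H, ?_, ?_, ?_⟩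
  · have : (N * matFun f H)ᴴ * (N * matFun f H) = matFun (fun x => Real.sqrt x * f x) H := by
      rw [Matrix.conjTranspose_mul, hfh, Matrix.mul_assoc, ← Matrix.mul_assoc Nᴴ, ← hHd,
        ← Matrix.mul_assoc, key]
      unfold msqrt
      rw [matFun_mul _ _ hH.1]
    rw [this, ← matFun_one hH.1, matFun_sub _ _ hH.1]
    apply matFun_psd hH
    intro x hx
    simp only [hf]
    rw [sub_nonneg]
    exact mul_inv_le_one
  · have h0 : N - N * matFun f H * msqrt H = 0 := by
      have e : N - N * matFun f H * msqrt H = N * (1 - matFun f H * msqrt H) := by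
        rw [Matrix.mul_sub, Matrix.mul_one, Matrix.mul_assoc]
      have e2 : (1 - matFun f H * msqrt H) = matFun (fun x => 1 - f x * Real.sqrt x) H := by
        unfold msqrt
        rw [matFun_mul _ _ hH.1, ← matFun_one hH.1, matFun_sub _ _ hH.1]
      have e3 : H * (1 - matFun f H * msqrt H) = 0 := by
        rw [e2]
        have : matFun (fun x => x) H * matFun (fun x => 1 - f x * Real.sqrt x) H
            = matFun (fun _ => 0) H := by
          rw [matFun_mul _ _ hH.1]
          apply matFun_congr hH
          intro x hx
          simp only [hf]
          rcases eq_or_lt_of_le hx with h | h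
          · simp [← h]
          · have := Real.sqrt_pos.2 h
            field_simp
            simp
        rw [matFun_id hH.1] at this
        rw [this, matFun_eq _ hH.1]
        simp
      rw [e]
      rw [← Matrix.conjTranspose_mul_self_eq_zero, Matrix.conjTranspose_mul, Matrix.mul_assoc,
        ← Matrix.mul_assoc Nᴴ, ← hHd, e3, Matrix.mul_zero]
    exact sub_eq_zero.1 h0
  · rw [Matrix.conjTranspose_mul, hfh, Matrix.mul_assoc, ← hHd, key]

lemma rtr_nonneg {A : Matrix n n ℂ} (hA : A.PosSemidef) : 0 ≤ rtr A :=
  (Complex.le_def.1 hA.trace_nonneg).1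

lemma rtr_add (A B : Matrix n n ℂ) : rtr (A + B) = rtr A + rtr B := by
  simp [rtr, Matrix.trace_add]

lemma rtr_sub (A B : Matrix n n ℂ) : rtr (A - B) = rtr A - rtr B := by
  simp [rtr, Matrix.trace_sub]

lemma rtr_smul (r : ℝ) (A : Matrix n n ℂ) : rtr ((r : ℂ) • A) = r * rtr A := by
  simp [rtr, Matrix.trace_smul]

lemma rtr_conj (A : Matrix n n ℂ) : rtr Aᴴ = rtr A := by
  simp [rtr, Matrix.trace_conjTranspose]

lemma rtr_comm (A : Matrix n k ℂ) (B : Matrix k n ℂ) : rtr (A * B) = rtr (B * A) := by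
  simp [rtr, Matrix.trace_mul_comm A B]

/-- Square root of the fidelity. -/
def sf (ρ σ : Matrix n n ℂ) : ℝ := rtr (msqrt (msqrt σ * ρ * msqrt σ))

/-- Positive semidefinite two-by-two block matrix. -/
def Blk (ρ X σ : Matrix n n ℂ) : Prop := (Matrix.fromBlocks ρ X Xᴴ σ).PosSemidef

lemma sf_N {ρ σ : Matrix n n ℂ} (hρ : ρ.PosSemidef) (hσ : σ.PosSemidef) :
    msqrt σ * ρ * msqrt σ = (msqrt ρ * msqrt σ)ᴴ * (msqrt ρ * msqrt σ) := by
  rw [Matrix.conjTranspose_mul, msqrt_herm hρ, msqrt_herm hσ]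
  conv_lhs => rw [← msqrt_mul_self hρ]
  simp only [Matrix.mul_assoc]

lemma sf_nonneg {ρ σ : Matrix n n ℂ} (hρ : ρ.PosSemidef) (hσ : σ.PosSemidef) : 0 ≤ sf ρ σ := by
  unfold sf
  rw [sf_N hρ hσ]
  exact rtr_nonneg (msqrt_psd (Matrix.posSemidef_conjTranspose_mul_self _))

lemma contr_bound {U V : Matrix k n ℂ} {P : Matrix n n ℂ} (hU : (1 - Uᴴ * U).PosSemidef)
    (hV : (1 - Vᴴ * V).PosSemidef) (hP : P.PosSemidef) : rtr (Uᴴ * V * P) ≤ rtr P := by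
  have aux : ∀ U : Matrix k n ℂ, (1 - Uᴴ * U).PosSemidef → rtr (Uᴴ * U * P) ≤ rtr P := by
    intro U hU
    have h := rtr_nonneg (hU.conjTranspose_mul_mul_same (msqrt P))
    rw [msqrt_herm hP, rtr_comm, ← Matrix.mul_assoc, msqrt_mul_self hP, rtr_comm, Matrix.sub_mul,
      rtr_sub, Matrix.one_mul] at h
    linarith
  have h := rtr_nonneg (hP.mul_mul_conjTranspose_same (U - V))
  rw [rtr_comm, ← Matrix.mul_assoc, Matrix.conjTranspose_sub, Matrix.sub_mul, Matrix.mul_sub,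
    Matrix.mul_sub, Matrix.sub_mul, Matrix.sub_mul, Matrix.sub_mul, rtr_sub, rtr_sub, rtr_sub] at h
  have e : rtr (Vᴴ * U * P) = rtr (Uᴴ * V * P) := by
    rw [← rtr_conj]
    simp only [Matrix.conjTranspose_mul, Matrix.conjTranspose_conjTranspose, hP.1.eq]
    rw [rtr_comm]
  have := aux U hU
  have := aux V hV
  linarith

lemma contr_mul {m : Type} [Fintype m] [DecidableEq m] {U : Matrix m k ℂ} {V : Matrix k n ℂ}
    (hU : (1 - Uᴴ * U).PosSemidef)
    (hV : (1 - Vᴴ * V).PosSemidef) : (1 - (U * V)ᴴ * (U * V)).PosSemidef := by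
  have h := (hU.conjTranspose_mul_mul_same V).add hV
  convert h using 1
  simp only [Matrix.conjTranspose_mul, Matrix.mul_sub, Matrix.sub_mul, Matrix.mul_one,
    Matrix.mul_assoc]
  abel

lemma Blk.le_sf {ρ X σ : Matrix n n ℂ} (h : Blk ρ X σ) (hρ : ρ.PosSemidef) (hσ : σ.PosSemidef) :
    rtr X ≤ sf ρ σ := by
  unfold Blk at h
  set Z := Matrix.fromBlocks ρ X Xᴴ σ with hZ
  set G := msqrt Z with hG
  have hGG : Gᴴ * G = Z := by rw [hG, msqrt_herm h, msqrt_mul_self h]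
  set G1 : Matrix (n ⊕ n) n ℂ := G.submatrix id Sum.inl with hG1
  set G2 : Matrix (n ⊕ n) n ℂ := G.submatrix id Sum.inr with hG2
  have h11 : G1ᴴ * G1 = ρ := by
    ext i j
    have := congrFun (congrFun hGG (Sum.inl i)) (Sum.inl j)
    simpa [Matrix.mul_apply, hZ, hG1] using this
  have h12 : G1ᴴ * G2 = X := by
    ext i j
    have := congrFun (congrFun hGG (Sum.inl i)) (Sum.inr j)
    simpa [Matrix.mul_apply, hZ, hG1, hG2] using this
  have h22 : G2ᴴ * G2 = σ := by
    ext i j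
    have := congrFun (congrFun hGG (Sum.inr i)) (Sum.inr j)
    simpa [Matrix.mul_apply, hZ, hG2] using this
  obtain ⟨W1, hW1, e1, -⟩ := polar G1
  obtain ⟨W2, hW2, e2, -⟩ := polar G2
  rw [h11] at e1
  rw [h22] at e2
  obtain ⟨W, hW, e, -⟩ := polar (msqrt ρ * msqrt σ)
  unfold sf
  rw [← sf_N hρ hσ] at e
  have hP : (msqrt (msqrt σ * ρ * msqrt σ)).PosSemidef := by
    rw [sf_N hρ hσ]
    exact msqrt_psd (Matrix.posSemidef_conjTranspose_mul_self _)
  set P := msqrt (msqrt σ * ρ * msqrt σ)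
  have e' : msqrt σ * msqrt ρ = P * Wᴴ := by
    have := congrArg Matrix.conjTranspose e
    rwa [Matrix.conjTranspose_mul, Matrix.conjTranspose_mul, msqrt_herm hρ, msqrt_herm hσ,
      hP.1.eq] at this
  have : rtr X = rtr ((W1 * W)ᴴ * W2 * P) := by
    rw [← h12, e1, e2, Matrix.conjTranspose_mul, msqrt_herm hρ, Matrix.mul_assoc, rtr_comm,
      Matrix.mul_assoc, Matrix.mul_assoc, e', Matrix.conjTranspose_mul, Matrix.mul_assoc, Matrix.mul_assoc,
      rtr_comm Wᴴ]
    simp only [Matrix.mul_assoc]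
  rw [this]
  exact contr_bound (contr_mul hW1 hW) hW2 hP

lemma contr_conj {W : Matrix k n ℂ} (hW : (1 - Wᴴ * W).PosSemidef) :
    (1 - W * Wᴴ).PosSemidef := by
  -- `1 - W Wᴴ` is the Schur complement
  letI : Invertible (1 : Matrix k k ℂ) := invertibleOne
  letI : Invertible (1 : Matrix n n ℂ) := invertibleOne
  have key : (Matrix.fromBlocks (1 : Matrix k k ℂ) W Wᴴ (1 : Matrix n n ℂ)).PosSemidef := by
    have := (Matrix.PosDef.one (n := k) (R := ℂ)).fromBlocks₁₁ W (1 : Matrix n n ℂ)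
    exact this.2 (by simpa using hW)
  have := (Matrix.PosDef.fromBlocks₂₂ (1 : Matrix k k ℂ) W (Matrix.PosDef.one (n := n) (R := ℂ))).1 key
  simpa using this

lemma exists_sf {ρ σ : Matrix n n ℂ} (hρ : ρ.PosSemidef) (hσ : σ.PosSemidef) :
    ∃ A : Matrix n n ℂ, (ρ - A * Aᴴ).PosSemidef ∧ rtr (Aᴴ * msqrt σ) = sf ρ σ := by
  obtain ⟨W, hW, -, e⟩ := polar (msqrt ρ * msqrt σ)
  refine ⟨msqrt ρ * W, ?_, ?_⟩
  · have h := (contr_conj hW).mul_mul_conjTranspose_same (msqrt ρ)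
    convert h using 1
    rw [Matrix.conjTranspose_mul, Matrix.mul_sub, Matrix.sub_mul, msqrt_herm hρ, Matrix.mul_one,
      msqrt_mul_self hρ]
    simp only [Matrix.mul_assoc]
  · rw [Matrix.conjTranspose_mul, msqrt_herm hρ, Matrix.mul_assoc, e]
    unfold sf
    rw [← sf_N hρ hσ]

lemma blk_of_factor {ρ τ A C : Matrix n n ℂ} (hA : (ρ - A * Aᴴ).PosSemidef)
    (hC : (τ - C * Cᴴ).PosSemidef) : Blk ρ (A * Cᴴ) τ := by
  have hd : (Matrix.fromBlocks (ρ - A * Aᴴ) 0 0 (τ - C * Cᴴ)).PosSemidef := by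
    have h := Matrix.posSemidef_conjTranspose_mul_self
      (Matrix.fromBlocks (msqrt (ρ - A * Aᴴ)) 0 0 (msqrt (τ - C * Cᴴ)))
    rw [Matrix.fromBlocks_conjTranspose, Matrix.fromBlocks_multiply, msqrt_herm hA, msqrt_herm hC,
      msqrt_mul_self hA, msqrt_mul_self hC] at h
    simpa using h
  have hm : (Matrix.fromBlocks (A * Aᴴ) (A * Cᴴ) (C * Aᴴ) (C * Cᴴ)).PosSemidef := by
    have h := Matrix.posSemidef_self_mul_conjTranspose (Matrix.fromBlocks A 0 C 0 : Matrix (n ⊕ n) (n ⊕ n) ℂ)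
    rw [Matrix.fromBlocks_conjTranspose, Matrix.fromBlocks_multiply] at h
    simpa using h
  have := hd.add hm
  rw [Matrix.fromBlocks_add] at this
  unfold Blk
  rw [Matrix.conjTranspose_mul, Matrix.conjTranspose_conjTranspose]
  simpa using this

lemma Blk.symm {ρ X σ : Matrix n n ℂ} (h : Blk ρ X σ) : Blk σ Xᴴ ρ := by
  have := h.submatrix (Sum.swap : n ⊕ n → n ⊕ n)
  unfold Blk
  convert this using 1
  ext i j
  rcases i with i | i <;> rcases j with j | j <;> simp

lemma blk_self {ρ : Matrix n n ℂ} (h : ρ.PosSemidef) : Blk ρ ρ ρ := by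
  have := h.submatrix (Sum.elim id id : n ⊕ n → n)
  unfold Blk
  convert this using 1
  rw [h.1.eq]
  ext i j
  rcases i with i | i <;> rcases j with j | j <;> simp

/-- Attainment of the square root fidelity by a block matrix. -/
lemma exists_blk {ρ σ : Matrix n n ℂ} (hρ : ρ.PosSemidef) (hσ : σ.PosSemidef) :
    ∃ X, Blk ρ X σ ∧ rtr X = sf ρ σ := by
  obtain ⟨A, hA, e⟩ := exists_sf hρ hσ
  refine ⟨A * (msqrt σ)ᴴ, blk_of_factor hA ?_, ?_⟩
  · rw [msqrt_herm hσ, msqrt_mul_self hσ, sub_self]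
    exact Matrix.PosSemidef.zero
  · rw [← e, ← rtr_conj, Matrix.conjTranspose_mul, Matrix.conjTranspose_conjTranspose, rtr_comm]

lemma sf_comm {ρ σ : Matrix n n ℂ} (hρ : ρ.PosSemidef) (hσ : σ.PosSemidef) :
    sf ρ σ = sf σ ρ := by
  have aux : ∀ {ρ σ : Matrix n n ℂ}, ρ.PosSemidef → σ.PosSemidef → sf ρ σ ≤ sf σ ρ := by
    intro ρ σ hρ hσ
    obtain ⟨X, hX, e⟩ := exists_blk hρ hσ
    rw [← e, ← rtr_conj]
    exact hX.symm.le_sf hσ hρ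
  exact le_antisymm (aux hρ hσ) (aux hσ hρ)

lemma rtr_cs (X Y : Matrix n k ℂ) :
    rtr (Xᴴ * Y) ^ 2 ≤ rtr (Xᴴ * X) * rtr (Yᴴ * Y) := by
  have h : ∀ x : ℝ, 0 ≤ rtr (Yᴴ * Y) * (x * x) + (2 * rtr (Xᴴ * Y)) * x + rtr (Xᴴ * X) := by
    intro x
    have h := rtr_nonneg (Matrix.posSemidef_conjTranspose_mul_self (X + (x : ℂ) • Y))
    have e : rtr (Yᴴ * X) = rtr (Xᴴ * Y) := by
      rw [← rtr_conj, Matrix.conjTranspose_mul, Matrix.conjTranspose_conjTranspose]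
    rw [Matrix.conjTranspose_add, Matrix.conjTranspose_smul, Matrix.add_mul, Matrix.mul_add,
      Matrix.mul_add, rtr_add, rtr_add, rtr_add] at h
    simp only [Matrix.smul_mul, Matrix.mul_smul, RCLike.star_def, Complex.conj_ofReal, rtr_smul, e] at h
    linarith
  have := discrim_le_zero h
  unfold discrim at this
  nlinarith

lemma IsState.rtr {ρ : Matrix n n ℂ} (h : IsState ρ) : rtr ρ = 1 := by
  simp [QCD.rtr, h.2]

lemma sf_le_one {ρ σ : Matrix n n ℂ} (hρ : IsState ρ) (hσ : IsState σ) : sf ρ σ ≤ 1 := by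
  obtain ⟨A, hA, e⟩ := exists_sf hρ.1 hσ.1
  have h := rtr_cs A (msqrt σ)
  have h1 := rtr_nonneg hA
  rw [rtr_sub, hρ.rtr, rtr_comm] at h1
  rw [e, msqrt_herm hσ.1, msqrt_mul_self hσ.1, hσ.rtr] at h
  nlinarith [sf_nonneg hρ.1 hσ.1]

lemma scalar_tri {s t u p q : ℝ} (hs : 0 ≤ s) (ht : 0 ≤ t) (hs1 : s ≤ 1) (ht1 : t ≤ 1)
    (hp : 0 ≤ p) (hq : 0 ≤ q)
    (hsp : s ^ 2 + p ^ 2 = 1) (htq : t ^ 2 + q ^ 2 = 1) (hu : s * t - p * q ≤ u) :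
    1 - u ^ 2 ≤ (p + q) ^ 2 := by
  rcases le_total (p * q) (s * t) with h | h
  · have h1 : (s * t - p * q) ^ 2 ≤ u ^ 2 := by
      apply pow_le_pow_left₀ (by linarith) hu
    have h2 : 1 - (s * t - p * q) ^ 2 = (s * q + p * t) ^ 2 := by
      have : (s ^ 2 + p ^ 2) * (t ^ 2 + q ^ 2) = 1 := by rw [hsp, htq]; norm_num
      linarith [this]
    have h3 : (s * q + p * t) ^ 2 ≤ (p + q) ^ 2 := by
      apply pow_le_pow_left₀ (by positivity)
      nlinarith
    linarith
  · have h1 : (s * t) ^ 2 ≤ (p * q) ^ 2 := pow_le_pow_left₀ (by positivity) h 2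
    have h2 : 1 ≤ p ^ 2 + q ^ 2 := by
      have e1 : s ^ 2 = 1 - p ^ 2 := by linarith
      have e2 : t ^ 2 = 1 - q ^ 2 := by linarith
      rw [mul_pow, mul_pow, e1, e2] at h1
      linarith
    nlinarith [mul_nonneg hp hq, sq_nonneg u]

lemma sineDist_eq (ρ σ : Matrix n n ℂ) : sineDist ρ σ = Real.sqrt (1 - sf ρ σ ^ 2) := rfl

/-- Triangle inequality for the sine distance. -/
lemma sineDist_triangle {ρ σ τ : Matrix n n ℂ} (hρ : IsState ρ) (hσ : IsState σ)
    (hτ : IsState τ) : sineDist ρ τ ≤ sineDist ρ σ + sineDist σ τ := by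
  obtain ⟨A, hA, eA⟩ := exists_sf hρ.1 hσ.1
  obtain ⟨C, hC, eC⟩ := exists_sf hτ.1 hσ.1
  have hu := (blk_of_factor hA hC).le_sf hρ.1 hτ.1
  rw [sineDist_eq, sineDist_eq, sineDist_eq, sf_comm hσ.1 hτ.1]
  have s0 := sf_nonneg hρ.1 hσ.1
  have t0 := sf_nonneg hτ.1 hσ.1
  have s1 := sf_le_one hρ hσ
  have t1 := sf_le_one hτ hσ
  set s := sf ρ σ
  set t := sf τ σ
  have hA1 := rtr_nonneg hA
  rw [rtr_sub, hρ.rtr, rtr_comm] at hA1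
  have hC1 := rtr_nonneg hC
  rw [rtr_sub, hτ.rtr, rtr_comm] at hC1
  have hb : QCD.rtr ((msqrt σ)ᴴ * msqrt σ) = 1 := by
    rw [msqrt_herm hσ.1, msqrt_mul_self hσ.1, hσ.rtr]
  set b := msqrt σ
  have swap : ∀ X Y : Matrix n n ℂ, QCD.rtr (Xᴴ * Y) = QCD.rtr (Yᴴ * X) := by
    intro X Y
    rw [← rtr_conj, Matrix.conjTranspose_mul, Matrix.conjTranspose_conjTranspose]
  have expand : ∀ (X Y : Matrix n n ℂ) (x y : ℝ),
      QCD.rtr ((X - (x : ℂ) • b)ᴴ * (Y - (y : ℂ) • b)) =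
      QCD.rtr (Xᴴ * Y) - y * QCD.rtr (Xᴴ * b) - x * QCD.rtr (Yᴴ * b) + x * y := by
    intro X Y x y
    rw [Matrix.conjTranspose_sub, Matrix.conjTranspose_smul, Matrix.sub_mul, Matrix.mul_sub,
      Matrix.mul_sub, rtr_sub, rtr_sub, rtr_sub]
    simp only [Matrix.smul_mul, Matrix.mul_smul, RCLike.star_def, Complex.conj_ofReal, rtr_smul, hb]
    rw [swap b Y]
    ring
  have cs := rtr_cs (A - (s : ℂ) • b) (C - (t : ℂ) • b)
  rw [expand, expand, expand, eA, eC] at cs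
  have hAC : QCD.rtr (A * Cᴴ) = QCD.rtr (Aᴴ * C) := by
    rw [swap, rtr_comm]
  rw [hAC] at hu
  have ps := Real.sq_sqrt (show 0 ≤ 1 - s ^ 2 by nlinarith)
  have qs := Real.sq_sqrt (show 0 ≤ 1 - t ^ 2 by nlinarith)
  have p0 := Real.sqrt_nonneg (1 - s ^ 2)
  have q0 := Real.sqrt_nonneg (1 - t ^ 2)
  set p := Real.sqrt (1 - s ^ 2)
  set q := Real.sqrt (1 - t ^ 2)
  have cs2 : (QCD.rtr (Aᴴ * C) - s * t) ^ 2 ≤ (p * q) ^ 2 := by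
    have n1 : 0 ≤ QCD.rtr ((A - (s : ℂ) • b)ᴴ * (A - (s : ℂ) • b)) :=
      rtr_nonneg (Matrix.posSemidef_conjTranspose_mul_self _)
    have n2 : 0 ≤ QCD.rtr ((C - (t : ℂ) • b)ᴴ * (C - (t : ℂ) • b)) :=
      rtr_nonneg (Matrix.posSemidef_conjTranspose_mul_self _)
    rw [expand, eA] at n1
    rw [expand, eC] at n2
    rw [mul_pow, ps, qs]
    calc (QCD.rtr (Aᴴ * C) - s * t) ^ 2 = _ := by ring
      _ ≤ _ := cs
      _ ≤ _ := mul_le_mul (by linarith) (by linarith) n2 (by linarith)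
  have := abs_le_of_sq_le_sq' cs2 (by positivity)
  rw [Real.sqrt_le_left (by positivity)]
  exact scalar_tri s0 t0 s1 t1 p0 q0 (by linarith) (by linarith) (by linarith [this.1])

lemma sineDist_self {ρ : Matrix n n ℂ} (h : IsState ρ) : sineDist ρ ρ = 0 := by
  rw [sineDist_eq]
  have := (blk_self h.1).le_sf h.1 h.1
  rw [h.rtr] at this
  apply Real.sqrt_eq_zero_of_nonpos
  nlinarith

/-! Channels -/

lemma IsQChannel.blk {Φ : Matrix n n ℂ →ₗ[ℂ] Matrix k k ℂ} (hΦ : IsQChannel Φ)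
    {ρ X σ : Matrix n n ℂ} (h : Blk ρ X σ) : Blk (Φ ρ) (Φ X) (Φ σ) := by
  let e : Fin 2 × n → n ⊕ n := fun p => if p.1 = 0 then Sum.inl p.2 else Sum.inr p.2
  have h1 := hΦ.2 2 (by norm_num) _ (h.submatrix e)
  let g : k ⊕ k → Fin 2 × k := Sum.elim (fun i => (0, i)) (fun i => (1, i))
  have h2 := h1.submatrix g
  have e2 : (blockApply Φ ((Matrix.fromBlocks ρ X Xᴴ σ).submatrix e e)).submatrix g g =
      Matrix.fromBlocks (Φ ρ) (Φ X) (Φ Xᴴ) (Φ σ) := by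
    ext i j
    rcases i with i | i <;> rcases j with j | j <;>
      simp only [Matrix.submatrix_apply, blockApply, g, e, Matrix.of_apply, Sum.elim_inl,
        Sum.elim_inr, Matrix.fromBlocks_apply₁₁, Matrix.fromBlocks_apply₁₂,
        Matrix.fromBlocks_apply₂₁, Matrix.fromBlocks_apply₂₂, if_true, one_ne_zero, if_false] <;> rfl
  rw [e2] at h2
  have h3 := h2.1
  rw [Matrix.isHermitian_fromBlocks_iff] at h3
  unfold Blk
  rw [h3.2.1]
  exact h2

lemma IsQChannel.psd {Φ : Matrix n n ℂ →ₗ[ℂ] Matrix k k ℂ} (hΦ : IsQChannel Φ)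
    {ρ : Matrix n n ℂ} (h : ρ.PosSemidef) : (Φ ρ).PosSemidef :=
  (hΦ.blk (blk_self h)).submatrix Sum.inl

lemma IsQChannel.state {Φ : Matrix n n ℂ →ₗ[ℂ] Matrix k k ℂ} (hΦ : IsQChannel Φ)
    {ρ : Matrix n n ℂ} (h : IsState ρ) : IsState (Φ ρ) :=
  ⟨hΦ.psd h.1, by rw [hΦ.1, h.2]⟩

lemma IsQChannel.sf_le {Φ : Matrix n n ℂ →ₗ[ℂ] Matrix k k ℂ} (hΦ : IsQChannel Φ)
    {ρ σ : Matrix n n ℂ} (hρ : ρ.PosSemidef) (hσ : σ.PosSemidef) :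
    sf ρ σ ≤ sf (Φ ρ) (Φ σ) := by
  obtain ⟨X, hX, e⟩ := exists_blk hρ hσ
  have := (hΦ.blk hX).le_sf (hΦ.psd hρ) (hΦ.psd hσ)
  rw [← e]
  unfold rtr at *
  rwa [hΦ.1] at this

/-! Tensor powers -/

lemma Blk.kron {ρ X σ : Matrix n n ℂ} {ρ' X' σ' : Matrix k k ℂ} (h : Blk ρ X σ)
    (h' : Blk ρ' X' σ') : Blk (ρ ⊗ₖ ρ') (X ⊗ₖ X') (σ ⊗ₖ σ') := by
  have h2 := (Matrix.PosSemidef.kronecker h h').submatrix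
    (Sum.elim (fun p : n × k => (Sum.inl p.1, Sum.inl p.2)) (fun p : n × k => (Sum.inr p.1, Sum.inr p.2)))
  unfold Blk
  refine Eq.subst (motive := fun M : Matrix _ _ ℂ => M.PosSemidef) ?_ h2
  ext i j
  rcases i with i | i <;> rcases j with j | j <;> simp [Matrix.kroneckerMap_apply]

lemma tpow_trace (A : Matrix n n ℂ) (j : ℕ) : (tpowMat A j).trace = A.trace ^ j := by
  induction j with
  | zero => exact (Matrix.trace_one).trans (by simp; rfl)
  | succ j ih =>
    refine (Matrix.trace_kronecker (tpowMat A j) A).trans ?_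
    rw [ih, pow_succ]

lemma tpow_psd {A : Matrix n n ℂ} (hA : A.PosSemidef) (j : ℕ) : (tpowMat A j).PosSemidef := by
  induction j with
  | zero => exact Matrix.PosSemidef.one
  | succ j ih => exact Matrix.PosSemidef.kronecker ih hA

lemma tpow_state {A : Matrix n n ℂ} (hA : IsState A) (j : ℕ) : IsState (tpowMat A j) :=
  ⟨tpow_psd hA.1 j, by rw [tpow_trace, hA.2, one_pow]⟩

lemma tpow_blk {ρ X σ : Matrix n n ℂ} (h : Blk ρ X σ) (j : ℕ) :
    Blk (tpowMat ρ j) (tpowMat X j) (tpowMat σ j) := by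
  induction j with
  | zero => exact blk_self Matrix.PosSemidef.one
  | succ j ih => exact Blk.kron ih h

/-- Attainment with real trace is automatic for the block matrix built from the polar part. -/
lemma exists_blk' {ρ σ : Matrix n n ℂ} (hρ : ρ.PosSemidef) (hσ : σ.PosSemidef) :
    ∃ X, Blk ρ X σ ∧ X.trace = (sf ρ σ : ℂ) := by
  obtain ⟨W, hW, -, e⟩ := polar (msqrt ρ * msqrt σ)
  rw [← sf_N hρ hσ] at e
  have hA : (ρ - (msqrt ρ * W) * (msqrt ρ * W)ᴴ).PosSemidef := by
    have h := (contr_conj hW).mul_mul_conjTranspose_same (msqrt ρ)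
    convert h using 1
    rw [Matrix.conjTranspose_mul, Matrix.mul_sub, Matrix.sub_mul, msqrt_herm hρ, Matrix.mul_one,
      msqrt_mul_self hρ]
    simp only [Matrix.mul_assoc]
  have hP : (msqrt (msqrt σ * ρ * msqrt σ)).PosSemidef := by
    rw [sf_N hρ hσ]
    exact msqrt_psd (Matrix.posSemidef_conjTranspose_mul_self _)
  have hB : (σ - msqrt σ * (msqrt σ)ᴴ).PosSemidef := by
    rw [msqrt_herm hσ, msqrt_mul_self hσ, sub_self]
    exact Matrix.PosSemidef.zero
  refine ⟨_, blk_of_factor hA hB, ?_⟩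
  have e' : msqrt σ * (msqrt ρ * W) = msqrt (msqrt σ * ρ * msqrt σ) := by
    have := congrArg Matrix.conjTranspose e
    rwa [Matrix.conjTranspose_mul, Matrix.conjTranspose_mul, msqrt_herm hρ, msqrt_herm hσ,
      Matrix.conjTranspose_conjTranspose, hP.1.eq, Matrix.mul_assoc] at this
  rw [msqrt_herm hσ, Matrix.trace_mul_comm, e']
  have := (Complex.le_def.1 hP.trace_nonneg).2
  apply Complex.ext
  · simp [sf, rtr]
  · simpa using this.symm

lemma tpow_sf {ρ σ : Matrix n n ℂ} (hρ : ρ.PosSemidef) (hσ : σ.PosSemidef) (j : ℕ) :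
    sf ρ σ ^ j ≤ sf (tpowMat ρ j) (tpowMat σ j) := by
  obtain ⟨X, hX, e⟩ := exists_blk' hρ hσ
  have := (tpow_blk hX j).le_sf (tpow_psd hρ j) (tpow_psd hσ j)
  unfold rtr at this
  rw [tpow_trace, e, ← Complex.ofReal_pow, Complex.ofReal_re] at this
  exact this

lemma tpow_sineDist {ρ σ : Matrix n n ℂ} (hρ : IsState ρ) (hσ : IsState σ) (j : ℕ) :
    sineDist (tpowMat ρ j) (tpowMat σ j) ≤ j * sineDist ρ σ := by
  rw [sineDist_eq, sineDist_eq, Real.sqrt_le_left (by positivity)]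
  have s0 := sf_nonneg hρ.1 hσ.1
  have s1 := sf_le_one hρ hσ
  have h := tpow_sf hρ.1 hσ.1 j
  have p := Real.sq_sqrt (show 0 ≤ 1 - sf ρ σ ^ 2 by nlinarith)
  rw [mul_pow, p]
  have h2 : (sf ρ σ ^ 2) ^ j ≤ sf (tpowMat ρ j) (tpowMat σ j) ^ 2 := by
    rw [← pow_mul, mul_comm, pow_mul]
    exact pow_le_pow_left₀ (by positivity) h 2
  have hB := one_add_mul_le_pow (show (-2 : ℝ) ≤ sf ρ σ ^ 2 - 1 by nlinarith) j
  have e : 1 + (sf ρ σ ^ 2 - 1) = sf ρ σ ^ 2 := by ring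
  rw [e] at hB
  have hj : (j : ℝ) ≤ (j : ℝ) ^ 2 := by
    exact_mod_cast Nat.le_self_pow (by norm_num) j
  have : 0 ≤ ((j : ℝ) ^ 2 - j) * (1 - sf ρ σ ^ 2) :=
    mul_nonneg (by linarith) (by nlinarith)
  linarith

lemma chan_sineDist {Φ : Matrix n n ℂ →ₗ[ℂ] Matrix k k ℂ} (hΦ : IsQChannel Φ)
    {ρ σ : Matrix n n ℂ} (hρ : IsState ρ) (hσ : IsState σ) :
    sineDist (Φ ρ) (Φ σ) ≤ sineDist ρ σ := by
  rw [sineDist_eq, sineDist_eq]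
  apply Real.sqrt_le_sqrt
  have := pow_le_pow_left₀ (sf_nonneg hρ.1 hσ.1) (hΦ.sf_le hρ.1 hσ.1) 2
  linarith

lemma tpow_loewner {A B : Matrix n n ℂ} (hA : A.PosSemidef) (hB : B.PosSemidef) {c : ℝ}
    (hc : 0 ≤ c) (h : ((c : ℂ) • B - A).PosSemidef) (j : ℕ) :
    (((c ^ j : ℝ) : ℂ) • tpowMat B j - tpowMat A j).PosSemidef := by
  induction j with
  | zero =>
    have : (((c ^ 0 : ℝ) : ℂ) • tpowMat B 0 - tpowMat A 0) = 0 := by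
      simp [tpowMat]
    rw [this]
    exact Matrix.PosSemidef.zero
  | succ j ih =>
    have hcB : ((((c : ℝ)) : ℂ) • B).PosSemidef := hB.smul (by exact_mod_cast hc)
    have h1 := Matrix.PosSemidef.kronecker ih hcB
    have h2 := Matrix.PosSemidef.kronecker (tpow_psd hA j) h
    have h3 := h1.add h2
    have e : (((c ^ (j+1) : ℝ) : ℂ) • (tpowMat B j ⊗ₖ B) - tpowMat A j ⊗ₖ A) =
      (((c ^ j : ℝ) : ℂ) • tpowMat B j - tpowMat A j) ⊗ₖ ((c : ℂ) • B) +
        tpowMat A j ⊗ₖ ((c : ℂ) • B - A) := by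
      ext p q
      simp [Matrix.kroneckerMap_apply]
      ring
    rw [← e] at h3
    exact h3

lemma dMax_nonneg {ρ σ : Matrix n n ℂ} (hρ : IsState ρ) (hσ : IsState σ) : 0 ≤ dMax ρ σ := by
  unfold dMax
  apply le_sInf
  rintro x ⟨lam, rfl, h⟩
  have h1 := rtr_nonneg h
  rw [rtr_sub, rtr_smul, hρ.rtr, hσ.rtr] at h1
  by_contra hn
  have hl : lam < 0 := by
    rw [not_le] at hn
    exact_mod_cast hn
  have := Real.rpow_lt_one_of_one_lt_of_neg (show (1:ℝ) < 2 by norm_num) hl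
  linarith

lemma dMaxSmooth_nonneg {δ : ℝ} {ρ σ : Matrix n n ℂ} (hσ : IsState σ) :
    0 ≤ dMaxSmooth δ ρ σ := by
  unfold dMaxSmooth
  exact le_iInf fun ρ' => le_iInf fun h => dMax_nonneg h.1 hσ

end helpers

/-- One-shot chain-rule-type bound for the smoothed max-relative entropy. -/
theorem dMaxSmooth_oneshot_chain {d d' : ℕ}
    (E F : Matrix (Fin d) (Fin d) ℂ →ₗ[ℂ] Matrix (Fin d') (Fin d') ℂ)
    (hE : IsQChannel E) (hF : IsQChannel F)
    (ρ σ : Matrix (Fin d) (Fin d) ℂ) (hρ : IsState ρ) (hσ : IsState σ)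
    (ε ε' : ℝ) (hε : 0 < ε ∧ ε < 1) (hε' : 0 < ε' ∧ ε' < 1) (hεε' : ε + ε' < 1)
    (μ : ℝ) (hμ : 0 < μ) (m : ℕ) (hm : 1 ≤ m) :
    ∃ ν : Matrix (Fin d) (Fin d) ℂ, IsState ν ∧ sineDist ρ ν ≤ ε ∧
      dMaxSmooth (ε + ε') (tpowMat (E ρ) m) (tpowMat (F σ) m) ≤
        dMaxSmooth ε' (tpowMat (E ν) m) (tpowMat (F ν) m) +
          (((m : ℝ)) : EReal) * dMaxSmooth (ε / m) ρ σ + ((μ : ℝ) : EReal) := by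
  have hm0 : (0 : ℝ) < m := by exact_mod_cast hm
  have hD0 : 0 ≤ dMaxSmooth (ε / m) ρ σ := dMaxSmooth_nonneg hσ
  by_cases hD : dMaxSmooth (ε / m) ρ σ = ⊤
  · refine ⟨ρ, hρ, by rw [sineDist_self hρ]; exact hε.1.le, ?_⟩
    have ha : 0 ≤ dMaxSmooth ε' (tpowMat (E ρ) m) (tpowMat (F ρ) m) :=
      dMaxSmooth_nonneg (tpow_state (hF.state hρ) m)
    have hb : dMaxSmooth ε' (tpowMat (E ρ) m) (tpowMat (F ρ) m) ≠ ⊥ := by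
      intro h
      rw [h] at ha
      exact absurd ha (by simp)
    rw [hD, EReal.coe_mul_top_of_pos hm0, EReal.add_top_of_ne_bot hb, EReal.top_add_coe]
    exact le_top
  · obtain ⟨r, hr⟩ : ∃ r : ℝ, dMaxSmooth (ε / m) ρ σ = (r : EReal) := by
      refine ⟨_, (EReal.coe_toReal hD ?_).symm⟩
      intro h
      rw [h] at hD0
      exact absurd hD0 (by simp)
    have hlt : dMaxSmooth (ε / m) ρ σ < ((r + μ / m : ℝ) : EReal) := by
      rw [hr]
      exact_mod_cast (lt_add_of_pos_right r (div_pos hμ hm0))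
    have hlt' := hlt
    unfold dMaxSmooth at hlt'
    simp only [iInf_lt_iff] at hlt'
    obtain ⟨ν, ⟨hν, hνd⟩, hνl⟩ := hlt'
    unfold dMax at hνl
    rw [sInf_lt_iff] at hνl
    obtain ⟨_, ⟨lam, rfl, hlam⟩, hlam2⟩ := hνl
    have hlam3 : lam < r + μ / m := by exact_mod_cast hlam2
    have hεm : ε / m ≤ ε := div_le_self hε.1.le (by exact_mod_cast hm)
    refine ⟨ν, hν, hνd.trans hεm, ?_⟩
    have main : dMaxSmooth (ε + ε') (tpowMat (E ρ) m) (tpowMat (F σ) m) ≤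
        dMaxSmooth ε' (tpowMat (E ν) m) (tpowMat (F ν) m) + ((m * lam : ℝ) : EReal) := by
      rw [← EReal.sub_le_iff_le_add (.inl (EReal.coe_ne_bot _)) (.inl (EReal.coe_ne_top _))]
      conv_rhs => unfold dMaxSmooth
      refine le_iInf fun ω => le_iInf fun hω => ?_
      unfold dMax
      apply le_sInf
      rintro x ⟨κ, rfl, hκ⟩
      rw [EReal.sub_le_iff_le_add (.inl (EReal.coe_ne_bot _)) (.inl (EReal.coe_ne_top _))]
      have hball : sineDist (tpowMat (E ρ) m) ω ≤ ε + ε' := by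
        refine (sineDist_triangle (tpow_state (hE.state hρ) m) (tpow_state (hE.state hν) m)
          hω.1).trans (add_le_add ?_ hω.2)
        refine (tpow_sineDist (hE.state hρ) (hE.state hν) m).trans ?_
        calc (m : ℝ) * sineDist (E ρ) (E ν) ≤ m * (ε / m) :=
              mul_le_mul_of_nonneg_left ((chan_sineDist hE hρ hν).trans hνd) hm0.le
          _ = ε := by field_simp
      unfold dMaxSmooth
      refine (iInf₂_le ω ⟨hω.1, hball⟩).trans ?_
      unfold dMax
      apply sInf_le
      refine ⟨κ + m * lam, by push_cast; rfl, ?_⟩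
      have hFl : ((((2:ℝ) ^ lam : ℝ) : ℂ) • F σ - F ν).PosSemidef := by
        have := hF.psd hlam
        rwa [map_sub, map_smul] at this
      have h1 := tpow_loewner (hF.psd hν.1) (hF.psd hσ.1) (by positivity) hFl m
      have h2 : ((((2:ℝ) ^ κ : ℝ) : ℂ) • ((((((2:ℝ) ^ lam) ^ m : ℝ) : ℂ)) • tpowMat (F σ) m
          - tpowMat (F ν) m)).PosSemidef := h1.smul (by
            have : (0:ℝ) ≤ (2:ℝ) ^ κ := by positivity
            exact_mod_cast this)
      have h3 := h2.add hκ
      unfold loewnerLE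
      convert h3 using 1
      rw [smul_sub, smul_smul, sub_add_sub_cancel, ← Complex.ofReal_mul, ← Real.rpow_natCast,
        ← Real.rpow_mul (by norm_num), ← Real.rpow_add (by norm_num), mul_comm lam]
    refine main.trans ?_
    rw [hr, add_assoc]
    refine add_le_add le_rfl ?_
    have : (m : ℝ) * lam ≤ m * r + μ := by
      have := mul_le_mul_of_nonneg_left hlam3.le hm0.le
      rw [mul_add, mul_div_cancel₀ _ hm0.ne'] at this
      exact this
    exact_mod_cast this

end QCD
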